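/- There exists a 2-(24,4,1) packing with 42 blocks whose leave is a vertex-disjoint union of one cycle of length 3 and one cycle of length 21, covering all 24 points (leave type 3^1 21^1). -/

import Mathlib

/-!
The packing is the development of two base blocks under an automorphism of order 21. Take the points
to be `ℤ/21` together with three points `∞₀, ∞₁, ∞₂`, let the automorphism send `x` to `x + 1` and
`∞ⱼ` to `∞ⱼ₊₁` (indices mod 3), and develop the base blocks `{0, 3, 9, 13}` and `{0, 2, 7, ∞₀}`.

* Up to sign, the differences inside `{0, 3, 9, 13}` are `3, 4, 6, 8, 9, 10`, and those inside
  `{0, 2, 7}` are `2, 5, 7`. Each of `±2, …, ±10` therefore occurs exactly once, and `±1` never: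
  every pair of `ℤ/21` is covered exactly once, except the pairs `{x, x + 1}`, which are uncovered
  and form a cycle of length 21.
* The residues of `0, 2, 7` mod 3 are distinct, so each pair `{x, ∞ⱼ}` is covered exactly once.
* No block contains two of the points `∞ⱼ`, so these three points form a triangle in the leave.

The finitely many resulting conditions are verified by kernel computation.
-/

/-- A 2-(24,4,1) packing: a collection of 4-element blocks on 24 points such that
every pair of distinct points lies in at most one block. -/
def IsPacking (B : Finset (Finset (Fin 24))) : Prop :=
  (∀ b ∈ B, b.card = 4) ∧
  ∀ p q : Fin 24, p ≠ q → ∀ b₁ ∈ B, ∀ b₂ ∈ B,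
    p ∈ b₁ → q ∈ b₁ → p ∈ b₂ → q ∈ b₂ → b₁ = b₂

/-- Adjacency in the leave of a packing: the pair of distinct points is covered by no block. -/
def LeaveAdj (B : Finset (Finset (Fin 24))) (p q : Fin 24) : Prop :=
  p ≠ q ∧ ∀ b ∈ B, ¬ (p ∈ b ∧ q ∈ b)

/-- The leave of the packing `B` is a vertex-disjoint union of cycles whose lengths are
given by the list `L`, covering all 24 points. -/
def LeaveIsCycleType (B : Finset (Finset (Fin 24))) (L : List ℕ) : Prop :=
  ∃ f : (i : Fin L.length) → ZMod (L.get i) → Fin 24,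
    Function.Bijective (fun x : Σ i : Fin L.length, ZMod (L.get i) => f x.1 x.2) ∧
    ∀ p q : Fin 24, LeaveAdj B p q ↔
      ∃ i k, (p = f i k ∧ q = f i (k + 1)) ∨ (q = f i k ∧ p = f i (k + 1))

/-- The translate by `i` of the base block `{0, 3, 9, 13}`; the element `x` of `ℤ/21` is encoded as
the point `x` of `Fin 24`. -/
def finiteBlock (i : Fin 21) : Finset (Fin 24) :=
  {(i + 0).castLE (by decide), (i + 3).castLE (by decide), (i + 9).castLE (by decide),
    (i + 13).castLE (by decide)}

/-- The translate by `i` of the base block `{0, 2, 7, ∞₀}`; the point `∞ⱼ` is encoded as the point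
`21 + j` of `Fin 24`. -/
def infiniteBlock (i : Fin 21) : Finset (Fin 24) :=
  {(i + 0).castLE (by decide), (i + 2).castLE (by decide), (i + 7).castLE (by decide),
    Fin.ofNat 24 (21 + i.val % 3)}

/-- The 42 blocks obtained by developing the two base blocks. -/
def cyclicPacking : Finset (Finset (Fin 24)) :=
  Finset.univ.image finiteBlock ∪ Finset.univ.image infiniteBlock

/-- The cycles of the leave: `∞₀, ∞₁, ∞₂` for index `0`, and `0, 1, …, 20` for index `1`. -/
def leaveCycle (i : Fin [3, 21].length) (k : ZMod ([3, 21].get i)) : Fin 24 :=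
  Fin.ofNat 24 (if i = 0 then 21 + k.val else k.val)

lemma mem_cyclicPacking {b : Finset (Fin 24)} :
    b ∈ cyclicPacking ↔ (∃ i, finiteBlock i = b) ∨ ∃ i, infiniteBlock i = b := by
  simp [cyclicPacking]

lemma finiteBlock_card : ∀ i, (finiteBlock i).card = 4 := by
  decide +kernel

lemma infiniteBlock_card : ∀ i, (infiniteBlock i).card = 4 := by
  decide +kernel

lemma finiteBlock_inter_card_le :
    ∀ i j, i = j ∨ (finiteBlock i ∩ finiteBlock j).card ≤ 1 := by
  decide +kernel

lemma infiniteBlock_inter_card_le :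
    ∀ i j, i = j ∨ (infiniteBlock i ∩ infiniteBlock j).card ≤ 1 := by
  decide +kernel

lemma finiteBlock_inter_infiniteBlock_card_le :
    ∀ i j, (finiteBlock i ∩ infiniteBlock j).card ≤ 1 := by
  decide +kernel

lemma cyclicPacking_inter_card_le {b₁ b₂ : Finset (Fin 24)} (h₁ : b₁ ∈ cyclicPacking)
    (h₂ : b₂ ∈ cyclicPacking) : b₁ = b₂ ∨ (b₁ ∩ b₂).card ≤ 1 := by
  rw [mem_cyclicPacking] at h₁ h₂
  rcases h₁ with ⟨i, rfl⟩ | ⟨i, rfl⟩ <;> rcases h₂ with ⟨j, rfl⟩ | ⟨j, rfl⟩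
  · exact (finiteBlock_inter_card_le i j).imp_left (congrArg _)
  · exact .inr (finiteBlock_inter_infiniteBlock_card_le i j)
  · exact .inr (Finset.inter_comm (infiniteBlock i) _ ▸
      finiteBlock_inter_infiniteBlock_card_le j i)
  · exact (infiniteBlock_inter_card_le i j).imp_left (congrArg _)

lemma isPacking_cyclicPacking : IsPacking cyclicPacking := by
  refine ⟨fun b hb => ?_, fun p q hpq b₁ hb₁ b₂ hb₂ hp₁ hq₁ hp₂ hq₂ => ?_⟩
  · rcases mem_cyclicPacking.mp hb with ⟨i, rfl⟩ | ⟨i, rfl⟩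
    · exact finiteBlock_card i
    · exact infiniteBlock_card i
  · refine (cyclicPacking_inter_card_le hb₁ hb₂).resolve_right fun h => hpq ?_
    exact Finset.card_le_one.mp h p (Finset.mem_inter.mpr ⟨hp₁, hp₂⟩) q
      (Finset.mem_inter.mpr ⟨hq₁, hq₂⟩)

/-- Distinct indices give distinct blocks, because a block has four points while blocks with distinct
indices share at most one. -/
lemma card_cyclicPacking : cyclicPacking.card = 42 := by
  have hfin : Function.Injective finiteBlock := fun i j h => by
    have := finiteBlock_inter_card_le i j
    rw [← h, Finset.inter_self, finiteBlock_card] at this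
    simpa using this
  have hinf : Function.Injective infiniteBlock := fun i j h => by
    have := infiniteBlock_inter_card_le i j
    rw [← h, Finset.inter_self, infiniteBlock_card] at this
    simpa using this
  have hdisj : Disjoint (Finset.univ.image finiteBlock) (Finset.univ.image infiniteBlock) := by
    simp only [Finset.disjoint_left, Finset.mem_image, Finset.mem_univ, true_and]
    rintro _ ⟨i, rfl⟩ ⟨j, h⟩
    have := finiteBlock_inter_infiniteBlock_card_le i j
    rw [h, Finset.inter_self, finiteBlock_card] at this
    simp at this
  rw [cyclicPacking, Finset.card_union_of_disjoint hdisj, Finset.card_image_of_injective _ hfin,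
    Finset.card_image_of_injective _ hinf]
  simp

lemma leaveAdj_cyclicPacking {p q : Fin 24} : LeaveAdj cyclicPacking p q ↔
    p ≠ q ∧ (∀ i, ¬ (p ∈ finiteBlock i ∧ q ∈ finiteBlock i)) ∧
      ∀ i, ¬ (p ∈ infiniteBlock i ∧ q ∈ infiniteBlock i) := by
  simp only [LeaveAdj, mem_cyclicPacking, or_imp, forall_and, forall_exists_index,
    forall_apply_eq_imp_iff]

/-- The cycle lengths are nonzero, which makes the index types `ZMod` of the cycles finite. -/
instance neZero_cycleLength (i : Fin [3, 21].length) : NeZero ([3, 21].get i) :=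
  ⟨by revert i; decide⟩

lemma leaveCycle_injective :
    ∀ i k j l, leaveCycle i k = leaveCycle j l →
      (⟨i, k⟩ : Σ i, ZMod ([3, 21].get i)) = ⟨j, l⟩ := by
  decide +kernel

lemma leaveCycle_surjective : ∀ p, ∃ i k, leaveCycle i k = p := by
  decide +kernel

lemma uncovered_iff_leaveCycle : ∀ p q : Fin 24,
    (p ≠ q ∧ (∀ i, ¬ (p ∈ finiteBlock i ∧ q ∈ finiteBlock i)) ∧
      ∀ i, ¬ (p ∈ infiniteBlock i ∧ q ∈ infiniteBlock i)) ↔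
    ∃ i k, (p = leaveCycle i k ∧ q = leaveCycle i (k + 1)) ∨
      (q = leaveCycle i k ∧ p = leaveCycle i (k + 1)) := by
  decide +kernel

lemma leaveIsCycleType_cyclicPacking : LeaveIsCycleType cyclicPacking [3, 21] := by
  refine ⟨leaveCycle, ⟨fun x y h => leaveCycle_injective _ _ _ _ h, fun p => ?_⟩, fun p q =>
    leaveAdj_cyclicPacking.trans (uncovered_iff_leaveCycle p q)⟩
  obtain ⟨i, k, h⟩ := leaveCycle_surjective p
  exact ⟨⟨i, k⟩, h⟩

/-- There is a 2-(24,4,1) packing with 42 blocks whose leave is a vertex-disjoint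
union of cycles of lengths [3, 21], covering all 24 points. -/
theorem exists_max_packing_with_leave_type :
    ∃ B : Finset (Finset (Fin 24)), IsPacking B ∧ B.card = 42 ∧
      LeaveIsCycleType B [3, 21] := by
  exact ⟨cyclicPacking, isPacking_cyclicPacking, card_cyclicPacking,
    leaveIsCycleType_cyclicPacking⟩
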